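/- Assume 𝒱 ≠ {0}. The system Σ^Δ is vulnerable (i.e., not detectable) if and only if at least one of the following holds: (i) ker(B) ∩ ker(D) ⊄ ker(F); (ii) for some friend (M̂,N̂) ∈ ℱ(𝒱), the matrix L_{(M̂,N̂)} := [(E+FM̂)(A+BM̂)^{n−1}BN̂, …, (E+FM̂)BN̂, FN̂] is nonzero; (iii) for some friend (M̂,N̂) ∈ ℱ(𝒱), the complexification of the restricted matrix (A+BM̂)|_{V*} has an eigenvalue λ ∈ ℂ with |λ| ≥ 1 whose generalized eigenspace S ⊆ ℂ^d is not contained in the kernel of the complexification of the matrix (E+FM̂)V*. -/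

import Mathlib

/-!
The system is linear and starts at rest, so detectability means that a bounded output forces a
bounded impact. Throughout, a friend `M` of `V` is used as feedback: with `a = M x + w` the output
depends only on the state modulo `V` and on `w`.

*Attacks.* An input in `ker B ∩ ker D` outside `ker F`, or an impulse through `N`, gives zero output
and nonzero impact, which can be scaled at will (`not_detectable_of_kernel`,
`not_detectable_of_impulse`). For an unstable visible mode, choose a generalized eigenvector `w` of
least order with `H w ≠ 0`, where `H = (E + F M) V*`. Then `H Φ ^ i w = lam ^ i H w` exactly
(`exists_apparent_eigenvector`), and rotating the phase and taking real parts yields bounded real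
states whose responses all align with one fixed vector (`exists_resonance`). Every state of
`V ⊓ ctrlSubspace A B` can be added by a pulse of `n` steps with output proportional to its norm,
after which the feedback keeps it silent. Small pulses, one per block of `n` steps, therefore keep
the output small while their impacts add up without bound (`not_detectable_of_resonance`); this
covers `‖lam‖ = 1` and `‖lam‖ > 1` alike.

*Detectability.* The initial states for which the output can be kept at zero for `N + 1` steps
decrease with `N` to an output-nulling subspace, hence they lie in `V` for large `N`
(`mem_of_output_zero`). A linear map vanishing on the kernel of another one factors through it, so
the state modulo `V`, and `w` modulo `{u | D u = 0, B u ∈ V}`, are bounded by the output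
(`exists_output_bounds`). Inputs in that last subspace have no impact when the first two conditions
fail (`invisible_input_no_impact`). What is left is a bounded forcing of the closed loop on
`V ⊓ ctrlSubspace A B`, and if all unstable generalized eigenspaces lie in `ker H`, the impulse
response `H Φ ^ i` is summable (`summable_real_orbit`), so the impact is bounded
(`detectable_of_no_attack`).
-/

open Matrix

noncomputable section

/-- The linear map between Euclidean spaces induced by a real matrix. -/
def matL {ι κ : Type*} [Fintype ι] [Fintype κ] [DecidableEq κ]
    (A : Matrix ι κ ℝ) : EuclideanSpace ℝ κ →ₗ[ℝ] EuclideanSpace ℝ ι :=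
  Matrix.toEuclideanLin A

variable {ι κ ρ σ : Type*} [Fintype ι] [DecidableEq ι] [Fintype κ] [DecidableEq κ]
  [Fintype ρ] [DecidableEq ρ] [Fintype σ] [DecidableEq σ]

/-- State trajectory of `x_{k+1} = A x_k + B a_k` from initial state `x0`
and input sequence `a`. -/
def stateTraj (A : Matrix ι ι ℝ) (B : Matrix ι κ ℝ)
    (x0 : EuclideanSpace ℝ ι) (a : ℕ → EuclideanSpace ℝ κ) :
    ℕ → EuclideanSpace ℝ ι
  | 0 => x0
  | k + 1 => matL A (stateTraj A B x0 a k) + matL B (a k)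

/-- Output trajectory `y_k = C x_k + D a_k` of the system. -/
def outTraj (A : Matrix ι ι ℝ) (B : Matrix ι κ ℝ)
    (C : Matrix ρ ι ℝ) (D : Matrix ρ κ ℝ)
    (x0 : EuclideanSpace ℝ ι) (a : ℕ → EuclideanSpace ℝ κ) (k : ℕ) :
    EuclideanSpace ℝ ρ :=
  matL C (stateTraj A B x0 a k) + matL D (a k)

/-- `W` is an output-nulling subspace for the system `(A,B,C,D)`. -/
def IsOutputNulling (A : Matrix ι ι ℝ) (B : Matrix ι κ ℝ)
    (C : Matrix ρ ι ℝ) (D : Matrix ρ κ ℝ)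
    (W : Submodule ℝ (EuclideanSpace ℝ ι)) : Prop :=
  ∃ M : Matrix κ ι ℝ,
    (∀ v ∈ W, matL (A + B * M) v ∈ W) ∧ (∀ v ∈ W, matL (C + D * M) v = 0)

/-- `V` is the maximal output-nulling subspace for the system `(A,B,C,D)`. -/
def IsMaxOutputNulling (A : Matrix ι ι ℝ) (B : Matrix ι κ ℝ)
    (C : Matrix ρ ι ℝ) (D : Matrix ρ κ ℝ)
    (V : Submodule ℝ (EuclideanSpace ℝ ι)) : Prop :=
  IsOutputNulling A B C D V ∧
    ∀ W : Submodule ℝ (EuclideanSpace ℝ ι), IsOutputNulling A B C D W → W ≤ V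

/-- `(M, N)` is a friend of the (maximal output-nulling) subspace `V`. -/
def IsFriend (A : Matrix ι ι ℝ) (B : Matrix ι κ ℝ)
    (C : Matrix ρ ι ℝ) (D : Matrix ρ κ ℝ)
    (V : Submodule ℝ (EuclideanSpace ℝ ι))
    (M : Matrix κ ι ℝ) (N : Matrix κ σ ℝ) : Prop :=
  (∀ v ∈ V, matL (A + B * M) v ∈ V) ∧
  (∀ v ∈ V, matL (C + D * M) v = 0) ∧
  (LinearMap.range (matL N) ≤ LinearMap.ker (matL D)) ∧
  (LinearMap.range (matL (B * N)) =
    (LinearMap.ker (matL D)).map (matL B) ⊓ V)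

/-- The system (with zero initial state, no noise) is detectable: some severity
threshold `δ` is always revealed at output level `ε`. -/
def Detectable {n m p r : ℕ}
    (A : Matrix (Fin n) (Fin n) ℝ) (B : Matrix (Fin n) (Fin m) ℝ)
    (C : Matrix (Fin p) (Fin n) ℝ) (D : Matrix (Fin p) (Fin m) ℝ)
    (E : Matrix (Fin r) (Fin n) ℝ) (F : Matrix (Fin r) (Fin m) ℝ) : Prop :=
  ∃ δ : ℝ, 0 < δ ∧ ∃ ε : ℝ, 0 < ε ∧
    ∀ a : ℕ → EuclideanSpace ℝ (Fin m),
      (∃ kz : ℕ, δ ≤ ‖outTraj A B E F 0 a kz‖) →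
      ∃ ky : ℕ, ε ≤ ‖outTraj A B C D 0 a ky‖

/-- The controllable subspace of the pair `(A, B)`. -/
def ctrlSubspace {n m : ℕ}
    (A : Matrix (Fin n) (Fin n) ℝ) (B : Matrix (Fin n) (Fin m) ℝ) :
    Submodule ℝ (EuclideanSpace ℝ (Fin n)) :=
  ⨆ j : Fin n, LinearMap.range (matL (A ^ (j : ℕ) * B))


set_option linter.unusedSectionVars false

/-! ### Linear algebra over a field -/

section LinearAlgebra

/-- If `g` vanishes on the kernel of `T`, then `g` factors through `T`; since the range of `T` is
finite-dimensional the factor is bounded. -/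
lemma exists_bound_of_ker_le {X Y Z : Type*} [AddCommGroup X] [Module ℝ X]
    [NormedAddCommGroup Y] [NormedSpace ℝ Y] [FiniteDimensional ℝ Y]
    [NormedAddCommGroup Z] [NormedSpace ℝ Z]
    (T : X →ₗ[ℝ] Y) (g : X →ₗ[ℝ] Z) (h : ∀ x, T x = 0 → g x = 0) :
    ∃ K : ℝ, 0 ≤ K ∧ ∀ x, ‖g x‖ ≤ K * ‖T x‖ := by
  obtain ⟨s, hs⟩ := T.rangeRestrict.exists_rightInverse_of_surjective T.range_rangeRestrict
  refine ⟨‖LinearMap.toContinuousLinearMap (g ∘ₗ s)‖, ContinuousLinearMap.opNorm_nonneg _, fun x => ?_⟩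
  have h1 : T (s (T.rangeRestrict x)) = T x := by
    have := congrArg Subtype.val (LinearMap.congr_fun hs (T.rangeRestrict x))
    simpa using this
  have h2 : g x = (g ∘ₗ s) (T.rangeRestrict x) := by
    have := h (x - s (T.rangeRestrict x)) (by rw [map_sub, h1, sub_self])
    rw [map_sub, sub_eq_zero] at this
    simpa using this
  rw [h2]
  exact (LinearMap.toContinuousLinearMap (g ∘ₗ s)).le_opNorm (T.rangeRestrict x)

lemma exists_linear_proj {X : Type*} [AddCommGroup X] [Module ℝ X] (S : Submodule ℝ X) :
    ∃ P : X →ₗ[ℝ] X, (∀ x, P x ∈ S) ∧ ∀ x ∈ S, P x = x := by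
  obtain ⟨g, hg⟩ := S.subtype.exists_leftInverse_of_injective S.ker_subtype
  refine ⟨S.subtype ∘ₗ g, fun x => (g x).2, fun x hx => ?_⟩
  exact congrArg Subtype.val (LinearMap.congr_fun hg ⟨x, hx⟩)

/-- A linear relation that is total on a subspace `S` contains the graph of a linear map
over `S`. -/
lemma exists_linear_selection {X U : Type*} [AddCommGroup X] [Module ℝ X]
    [AddCommGroup U] [Module ℝ U] (S : Submodule ℝ X) (R : Submodule ℝ (X × U))
    (h : ∀ x ∈ S, ∃ u, (x, u) ∈ R) :
    ∃ f : X →ₗ[ℝ] U, ∀ x ∈ S, (x, f x) ∈ R := by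
  let φ : R →ₗ[ℝ] X := LinearMap.fst ℝ X U ∘ₗ R.subtype
  obtain ⟨s, hs⟩ := φ.rangeRestrict.exists_rightInverse_of_surjective φ.range_rangeRestrict
  obtain ⟨f, hf⟩ := (LinearMap.snd ℝ X U ∘ₗ R.subtype ∘ₗ s).exists_extend
  refine ⟨f, fun x hx => ?_⟩
  obtain ⟨u, hu⟩ := h x hx
  have hx' : x ∈ LinearMap.range φ := ⟨⟨(x, u), hu⟩, rfl⟩
  have h1 : f x = (s ⟨x, hx'⟩).1.2 := LinearMap.congr_fun hf ⟨x, hx'⟩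
  have h2 : (s ⟨x, hx'⟩).1.1 = x := congrArg Subtype.val (LinearMap.congr_fun hs ⟨x, hx'⟩)
  have h3 : (x, f x) = (s ⟨x, hx'⟩).1 := Prod.ext h2.symm h1
  rw [h3]
  exact (s ⟨x, hx'⟩).2

/-- Cayley–Hamilton: every power of an `n × n` matrix is a combination of the powers below `n`. -/
lemma pow_eq_sum_range {n : ℕ} (hn : 0 < n) (A : Matrix (Fin n) (Fin n) ℝ) (k : ℕ) :
    ∃ c : ℕ → ℝ, A ^ k = ∑ j ∈ Finset.range n, c j • A ^ j := by
  have : Nonempty (Fin n) := ⟨⟨0, hn⟩⟩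
  refine ⟨fun j => (Polynomial.X ^ k %ₘ A.charpoly).coeff j, ?_⟩
  rw [Matrix.pow_eq_aeval_mod_charpoly, Polynomial.aeval_eq_sum_range']
  have h1 := Polynomial.natDegree_modByMonic_lt (Polynomial.X ^ k) A.charpoly_monic
    (by
      intro h
      have := A.charpoly_natDegree_eq_dim
      rw [h, Polynomial.natDegree_one, Fintype.card_fin] at this
      omega)
  rwa [A.charpoly_natDegree_eq_dim, Fintype.card_fin] at h1

end LinearAlgebra

/-! ### Spectral estimates -/

section Spectral

variable {X Y : Type*} [AddCommGroup X] [Module ℂ X] [NormedAddCommGroup Y] [NormedSpace ℂ Y]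

/-- A Jordan block with eigenvalue inside the open unit disc has summable powers. -/
lemma summable_of_stable_block (f : Module.End ℂ X) (h : X →ₗ[ℂ] Y) {lam : ℂ}
    (hlam : ‖lam‖ < 1) (k : ℕ) :
    ∀ x, ((f - lam • (1 : Module.End ℂ X)) ^ k) x = 0 →
      Summable fun i : ℕ => ‖h ((f ^ i) x)‖ := by
  induction k with
  | zero =>
    intro x hx
    have hx : x = 0 := by simpa using hx
    simp [hx, summable_zero]
  | succ k ih =>
    intro x hx
    have hb := ih ((f - lam • (1 : Module.End ℂ X)) x) (by simpa [pow_succ] using hx)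
    set b : ℕ → ℝ := fun i => ‖h ((f ^ i) ((f - lam • (1 : Module.End ℂ X)) x))‖ with hbdef
    set a : ℕ → ℝ := fun i => ‖h ((f ^ i) x)‖ with hadef
    have ha0 : ∀ i, 0 ≤ a i := fun i => norm_nonneg _
    have hrec : ∀ i, a (i + 1) ≤ ‖lam‖ * a i + b i := by
      intro i
      have : h ((f ^ (i + 1)) x) =
          lam • h ((f ^ i) x) + h ((f ^ i) ((f - lam • (1 : Module.End ℂ X)) x)) := by
        rw [pow_succ]
        simp
      simp only [hadef, hbdef]
      rw [this]
      exact (norm_add_le _ _).trans (by rw [norm_smul])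
    have hpos : 0 < 1 - ‖lam‖ := by linarith
    -- Summing the recursion bounds the partial sums `s` of `a` by `s ≤ a 0 + ‖lam‖ * s + ∑ b`.
    refine summable_of_sum_range_le (c := (a 0 + ∑' i, b i) / (1 - ‖lam‖)) ha0 fun N => ?_
    rw [le_div_iff₀ hpos]
    have h1 : ∑ i ∈ Finset.range N, a i ≤ ∑ i ∈ Finset.range (N + 1), a i :=
      Finset.sum_le_sum_of_subset_of_nonneg
        (Finset.range_subset_range.2 (Nat.le_succ N)) fun i _ _ => ha0 i
    have h2 : ∑ i ∈ Finset.range (N + 1), a i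
        ≤ (∑ i ∈ Finset.range N, (‖lam‖ * a i + b i)) + a 0 := by
      rw [Finset.sum_range_succ']
      gcongr with i _
      exact hrec i
    have h3 : ∑ i ∈ Finset.range N, b i ≤ ∑' i, b i :=
      hb.sum_le_tsum _ fun i _ => norm_nonneg _
    rw [Finset.sum_add_distrib, ← Finset.mul_sum] at h2
    nlinarith

lemma summable_of_unstable_le_ker [FiniteDimensional ℂ X] (f : Module.End ℂ X) (h : X →ₗ[ℂ] Y)
    (hf : ∀ lam : ℂ, 1 ≤ ‖lam‖ → f.maxGenEigenspace lam ≤ LinearMap.ker h) (x : X) :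
    Summable fun i : ℕ => ‖h ((f ^ i) x)‖ := by
  have hx : x ∈ ⨆ lam : ℂ, f.maxGenEigenspace lam := by
    rw [Module.End.iSup_maxGenEigenspace_eq_top]; trivial
  induction hx using Submodule.iSup_induction' with
  | mem lam x hx =>
    by_cases hl : 1 ≤ ‖lam‖
    · have : ∀ i : ℕ, h ((f ^ i) x) = 0 := fun i => by
        have hmap : Set.MapsTo f (f.maxGenEigenspace lam) (f.maxGenEigenspace lam) :=
          Module.End.mapsTo_maxGenEigenspace_of_comm (Commute.refl f) lam
        have : (f ^ i) x ∈ f.maxGenEigenspace lam := by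
          rw [Module.End.coe_pow]
          exact hmap.iterate i hx
        exact hf lam hl this
      simp [this, summable_zero]
    · obtain ⟨k, hk⟩ := (Module.End.mem_maxGenEigenspace f lam x).1 hx
      exact summable_of_stable_block f h (not_le.1 hl) k x hk
  | zero => simp [summable_zero]
  | add x y _ _ hx hy =>
    refine Summable.of_nonneg_of_le (fun _ => norm_nonneg _) (fun i => ?_) (hx.add hy)
    rw [map_add, map_add]
    exact norm_add_le _ _

/-- If a generalized eigenspace is not inside `ker h`, take the least order `k` at which a
generalized eigenvector `w` escapes `ker h`: then `(f - lam) w` and its whole orbit lie in `ker h`,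
so `h` sees `w` as a genuine eigenvector. -/
lemma exists_apparent_eigenvector (f : Module.End ℂ X) (h : X →ₗ[ℂ] Y) (lam : ℂ)
    (hf : ¬ f.maxGenEigenspace lam ≤ LinearMap.ker h) :
    ∃ w, h w ≠ 0 ∧ ∀ i : ℕ, h ((f ^ i) w) = lam ^ i • h w := by
  classical
  have hex : ∃ k : ℕ, ∃ w, ((f - lam • (1 : Module.End ℂ X)) ^ k) w = 0 ∧ h w ≠ 0 := by
    obtain ⟨w, hw, hw'⟩ := SetLike.not_le_iff_exists.1 hf
    obtain ⟨k, hk⟩ := (Module.End.mem_maxGenEigenspace f lam w).1 hw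
    exact ⟨k, w, hk, hw'⟩
  obtain ⟨w, hw, hne⟩ := Nat.find_spec hex
  have hmin : ∀ j < Nat.find hex, ∀ v, ((f - lam • (1 : Module.End ℂ X)) ^ j) v = 0 → h v = 0 :=
    fun j hj v hv => by
      by_contra hv'
      exact Nat.find_min hex hj ⟨v, hv, hv'⟩
  obtain ⟨k, hk⟩ : ∃ k, Nat.find hex = k + 1 := by
    refine Nat.exists_eq_succ_of_ne_zero fun h0 => hne ?_
    rw [h0] at hw
    have : w = 0 := by simpa using hw
    simp [this]
  rw [hk] at hw hmin
  refine ⟨w, hne, fun i => ?_⟩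
  induction i with
  | zero => simp
  | succ i ih =>
    have hcomm : Commute ((f - lam • (1 : Module.End ℂ X)) ^ k) (f ^ i) :=
      (((Commute.refl f).sub_left ((Commute.one_left f).smul_left lam)).pow_left k).pow_right i
    have h0 : h ((f ^ i) ((f - lam • (1 : Module.End ℂ X)) w)) = 0 := by
      refine hmin k (Nat.lt_succ_self k) _ ?_
      have h1 := LinearMap.congr_fun hcomm.eq ((f - lam • (1 : Module.End ℂ X)) w)
      rw [Module.End.mul_apply, Module.End.mul_apply] at h1
      rw [h1, ← Module.End.mul_apply (_ ^ k), ← pow_succ, hw, map_zero]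
    have h2 : h ((f ^ (i + 1)) w) =
        lam • h ((f ^ i) w) + h ((f ^ i) ((f - lam • (1 : Module.End ℂ X)) w)) := by
      rw [pow_succ]
      simp
    rw [h2, h0, ih, add_zero, smul_smul, pow_succ']

end Spectral

/-! ### Matrices acting on Euclidean spaces -/

section MatL

lemma matL_apply (P : Matrix ι κ ℝ) (v : EuclideanSpace ℝ κ) (i : ι) :
    matL P v i = (P *ᵥ v.ofLp) i := rfl

lemma matL_mul_apply (P : Matrix ι κ ℝ) (Q : Matrix κ ρ ℝ) (v : EuclideanSpace ℝ ρ) :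
    matL (P * Q) v = matL P (matL Q v) := by
  ext i
  simp only [matL_apply]
  rw [← Matrix.mulVec_mulVec]
  rfl

lemma matL_add_apply (P Q : Matrix ι κ ℝ) (v : EuclideanSpace ℝ κ) :
    matL (P + Q) v = matL P v + matL Q v := by
  simp [matL]

lemma matL_one_apply (v : EuclideanSpace ℝ κ) : matL (1 : Matrix κ κ ℝ) v = v := by
  ext i
  simp [matL_apply]

lemma matL_eq_zero_iff (P : Matrix ι κ ℝ) : P = 0 ↔ ∀ v, matL P v = 0 := by
  constructor
  · rintro rfl v
    simp [matL]
  · intro h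
    have : matL P = 0 := LinearMap.ext h
    simpa [matL] using this

lemma exists_matL_eq (f : EuclideanSpace ℝ κ →ₗ[ℝ] EuclideanSpace ℝ ι) :
    ∃ P : Matrix ι κ ℝ, matL P = f :=
  ⟨Matrix.toEuclideanLin.symm f, Matrix.toEuclideanLin.apply_symm_apply f⟩

lemma norm_matL_bound (P : Matrix ι κ ℝ) :
    ∃ K : ℝ, 0 ≤ K ∧ ∀ v, ‖matL P v‖ ≤ K * ‖v‖ :=
  exists_bound_of_ker_le LinearMap.id (matL P) fun x hx => by
    rw [show x = 0 from hx, map_zero]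

lemma euclidean_norm_le_sum (x : EuclideanSpace ℝ ι) : ‖x‖ ≤ ∑ i, ‖x i‖ := by
  classical
  have h := (EuclideanSpace.basisFun ι ℝ).sum_repr x
  calc ‖x‖ = ‖∑ i, x i • EuclideanSpace.basisFun ι ℝ i‖ := by
        conv_lhs => rw [← h]
        simp
    _ ≤ ∑ i, ‖x i • EuclideanSpace.basisFun ι ℝ i‖ := norm_sum_le _ _
    _ = ∑ i, ‖x i‖ := by simp [norm_smul]

lemma norm_le_sum_basis {Z : Type*} [NormedAddCommGroup Z] [NormedSpace ℝ Z]
    (T : EuclideanSpace ℝ ι →ₗ[ℝ] Z) (g : EuclideanSpace ℝ ι) :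
    ‖T g‖ ≤ ‖g‖ * ∑ i, ‖T (EuclideanSpace.basisFun ι ℝ i)‖ := by
  have h := (EuclideanSpace.basisFun ι ℝ).sum_repr g
  calc ‖T g‖ = ‖∑ i, g i • T (EuclideanSpace.basisFun ι ℝ i)‖ := by
        conv_lhs => rw [← h, map_sum]
        simp
    _ ≤ ∑ i, ‖g i • T (EuclideanSpace.basisFun ι ℝ i)‖ := norm_sum_le _ _
    _ ≤ ∑ i, ‖g‖ * ‖T (EuclideanSpace.basisFun ι ℝ i)‖ := by
        refine Finset.sum_le_sum fun i _ => ?_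
        rw [norm_smul]
        gcongr
        exact PiLp.norm_apply_le g i
    _ = _ := by rw [Finset.mul_sum]

end MatL

/-! ### Transfer of the spectral estimates to real matrices -/

section RealSpectral

variable {d r : ℕ}

/-- The real part of a complex orbit of a real matrix is the orbit of the real part. -/
lemma re_orbit (Φ : Matrix (Fin d) (Fin d) ℝ) (H : Matrix (Fin r) (Fin d) ℝ) (i : ℕ)
    (x : Fin d → ℂ) (l : Fin r) :
    ((Matrix.mulVecLin (H.map (algebraMap ℝ ℂ)))
      (((Matrix.mulVecLin (Φ.map (algebraMap ℝ ℂ))) ^ i) x) l).re =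
      matL (H * Φ ^ i) (WithLp.toLp 2 fun j => (x j).re) l := by
  have h1 : (Matrix.mulVecLin (Φ.map (algebraMap ℝ ℂ))) ^ i
      = Matrix.mulVecLin ((Φ ^ i).map (algebraMap ℝ ℂ)) := by
    rw [← Matrix.toLin'_apply', ← Matrix.toLin'_apply', ← Matrix.toLin'_pow, Matrix.map_pow]
  rw [h1, Matrix.mulVecLin_apply, Matrix.mulVecLin_apply, Matrix.mulVec_mulVec, ← Matrix.map_mul,
    matL_apply]
  simp [Matrix.mulVec, dotProduct]

lemma summable_real_orbit (Φ : Matrix (Fin d) (Fin d) ℝ) (H : Matrix (Fin r) (Fin d) ℝ)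
    (hf : ∀ lam : ℂ, 1 ≤ ‖lam‖ →
      Module.End.maxGenEigenspace (Matrix.mulVecLin (Φ.map (algebraMap ℝ ℂ))) lam ≤
        LinearMap.ker (Matrix.mulVecLin (H.map (algebraMap ℝ ℂ))))
    (ξ : EuclideanSpace ℝ (Fin d)) :
    Summable fun i : ℕ => ‖matL (H * Φ ^ i) ξ‖ := by
  have hs := summable_of_unstable_le_ker _ _ hf (fun j => ((ξ j : ℝ) : ℂ))
  refine Summable.of_nonneg_of_le (fun _ => norm_nonneg _) (fun i => ?_)
    (hs.mul_left (r : ℝ))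
  refine (euclidean_norm_le_sum _).trans ?_
  have : ∀ l : Fin r, ‖matL (H * Φ ^ i) ξ l‖ ≤ ‖(Matrix.mulVecLin (H.map (algebraMap ℝ ℂ)))
      (((Matrix.mulVecLin (Φ.map (algebraMap ℝ ℂ))) ^ i) fun j => ((ξ j : ℝ) : ℂ))‖ := by
    intro l
    have h := re_orbit Φ H i (fun j => ((ξ j : ℝ) : ℂ)) l
    simp only [Complex.ofReal_re] at h
    change _ = matL (H * Φ ^ i) ξ l at h
    rw [← h]
    exact (Complex.abs_re_le_norm _).trans (norm_le_pi_norm _ l)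
  refine (Finset.sum_le_sum fun l _ => this l).trans ?_
  simp

/-- Resonance: when an unstable mode is visible through `H`, there are uniformly bounded states
`ξ i` whose responses `H Φ ^ i ξ i` all point in one direction `h₀ ≠ 0` with length at least that
of `h₀`. The phases of `lam ^ i` are cancelled by rotating the complex mode before taking real
parts. -/
lemma exists_resonance (Φ : Matrix (Fin d) (Fin d) ℝ) (H : Matrix (Fin r) (Fin d) ℝ)
    {lam : ℂ} (hlam : 1 ≤ ‖lam‖)
    (hf : ¬ Module.End.maxGenEigenspace (Matrix.mulVecLin (Φ.map (algebraMap ℝ ℂ))) lam ≤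
        LinearMap.ker (Matrix.mulVecLin (H.map (algebraMap ℝ ℂ)))) :
    ∃ h₀ : EuclideanSpace ℝ (Fin r), h₀ ≠ 0 ∧ ∃ R : ℝ, 0 < R ∧ ∀ i : ℕ,
      ∃ ξ : EuclideanSpace ℝ (Fin d), ‖ξ‖ ≤ R ∧
        ∃ t : ℝ, 1 ≤ t ∧ matL (H * Φ ^ i) ξ = t • h₀ := by
  obtain ⟨w', hw', hw'i⟩ := exists_apparent_eigenvector _ _ lam hf
  set f := Matrix.mulVecLin (Φ.map (algebraMap ℝ ℂ))
  set h := Matrix.mulVecLin (H.map (algebraMap ℝ ℂ))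
  -- Multiplying the mode by `I` if necessary, its image has a nonzero real part.
  obtain ⟨w, ⟨l, hl⟩, hwi⟩ : ∃ w, (∃ l, (h w l).re ≠ 0) ∧
      ∀ i : ℕ, h ((f ^ i) w) = lam ^ i • h w := by
    by_cases hre : ∃ l, (h w' l).re ≠ 0
    · exact ⟨w', hre, hw'i⟩
    · push Not at hre
      refine ⟨Complex.I • w', ?_, fun i => ?_⟩
      · by_contra hcon
        push Not at hcon
        refine hw' (funext fun l => Complex.ext (hre l) ?_)
        have := hcon l
        rw [map_smul] at this
        simpa using this
      · rw [map_smul, map_smul, map_smul, hw'i, smul_comm]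
  refine ⟨WithLp.toLp 2 fun l => (h w l).re, ?_, (∑ j, ‖w j‖) + 1, by positivity, fun i => ?_⟩
  · intro h0
    exact hl (congrArg (fun v : EuclideanSpace ℝ (Fin r) => v l) h0)
  have hne : ‖lam‖ ^ i ≠ 0 := by positivity
  have hpow : 1 ≤ ‖lam‖ ^ i := one_le_pow₀ hlam
  set c : ℂ := (starRingEnd ℂ) (lam ^ i) / ((‖lam‖ ^ i : ℝ) : ℂ) with hc
  have hcn : ‖c‖ = 1 := by
    rw [hc, norm_div, RCLike.norm_conj, norm_pow, Complex.norm_real, norm_pow, norm_norm,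
      div_self hne]
  have hcl : c * lam ^ i = ((‖lam‖ ^ i : ℝ) : ℂ) := by
    have hne' : ((‖lam‖ ^ i : ℝ) : ℂ) ≠ 0 := Complex.ofReal_ne_zero.2 hne
    rw [hc, div_mul_eq_mul_div, div_eq_iff hne', mul_comm, Complex.mul_conj,
      Complex.normSq_eq_norm_sq, norm_pow]
    push_cast
    ring
  refine ⟨WithLp.toLp 2 fun j => ((c • w) j).re, ?_, ‖lam‖ ^ i, hpow, ?_⟩
  · refine (euclidean_norm_le_sum _).trans ?_
    have : ∀ j, ‖((c • w) j).re‖ ≤ ‖w j‖ := fun j => by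
      refine (Complex.abs_re_le_norm _).trans ?_
      simp [hcn]
    have := Finset.sum_le_sum fun j (_ : j ∈ Finset.univ) => this j
    simp only at this ⊢
    linarith
  · ext l
    rw [← re_orbit Φ H i (c • w) l]
    change (h ((f ^ i) (c • w)) l).re = _
    rw [map_smul, map_smul, hwi, smul_smul, hcl,
      Pi.smul_apply, smul_eq_mul, Complex.re_ofReal_mul]
    rfl

end RealSpectral

/-! ### Trajectories -/

section Trajectories

variable (A : Matrix ι ι ℝ) (B : Matrix ι κ ℝ) (C : Matrix ρ ι ℝ) (D : Matrix ρ κ ℝ)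

lemma stateTraj_add (x₀ : EuclideanSpace ℝ ι) (a : ℕ → EuclideanSpace ℝ κ) (k j : ℕ) :
    stateTraj A B x₀ a (k + j) =
      stateTraj A B (stateTraj A B x₀ a k) (fun i => a (k + i)) j := by
  induction j with
  | zero => rfl
  | succ j ih =>
    rw [← add_assoc]
    simp only [stateTraj]
    rw [ih]

lemma outTraj_add (x₀ : EuclideanSpace ℝ ι) (a : ℕ → EuclideanSpace ℝ κ) (k j : ℕ) :
    outTraj A B C D x₀ a (k + j) =
      outTraj A B C D (stateTraj A B x₀ a k) (fun i => a (k + i)) j := by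
  simp only [outTraj, stateTraj_add]

lemma stateTraj_congr (x₀ : EuclideanSpace ℝ ι) {a b : ℕ → EuclideanSpace ℝ κ} (k : ℕ)
    (h : ∀ i < k, a i = b i) : stateTraj A B x₀ a k = stateTraj A B x₀ b k := by
  induction k with
  | zero => rfl
  | succ k ih =>
    simp only [stateTraj]
    rw [ih fun i hi => h i (by omega), h k (by omega)]

lemma stateTraj_mem (S : Submodule ℝ (EuclideanSpace ℝ ι)) {x₀ : EuclideanSpace ℝ ι}
    {a : ℕ → EuclideanSpace ℝ κ} (hx : x₀ ∈ S) (hA : ∀ v ∈ S, matL A v ∈ S)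
    (hB : ∀ i, matL B (a i) ∈ S) (k : ℕ) : stateTraj A B x₀ a k ∈ S := by
  induction k with
  | zero => exact hx
  | succ k ih => exact S.add_mem (hA _ ih) (hB k)

/-- The state at time `k` as a linear function of the initial state and the input sequence. -/
def stateL : ℕ → (EuclideanSpace ℝ ι × (ℕ → EuclideanSpace ℝ κ)) →ₗ[ℝ] EuclideanSpace ℝ ι
  | 0 => LinearMap.fst ℝ _ _
  | k + 1 => matL A ∘ₗ stateL k + matL B ∘ₗ LinearMap.proj k ∘ₗ LinearMap.snd ℝ _ _

/-- The output at time `k` as a linear function of the initial state and the input sequence. -/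
def outL (k : ℕ) :
    (EuclideanSpace ℝ ι × (ℕ → EuclideanSpace ℝ κ)) →ₗ[ℝ] EuclideanSpace ℝ ρ :=
  matL C ∘ₗ stateL A B k + matL D ∘ₗ LinearMap.proj k ∘ₗ LinearMap.snd ℝ _ _

lemma stateL_apply (x₀ : EuclideanSpace ℝ ι) (a : ℕ → EuclideanSpace ℝ κ) (k : ℕ) :
    stateL A B k (x₀, a) = stateTraj A B x₀ a k := by
  induction k with
  | zero => rfl
  | succ k ih => simp [stateL, stateTraj, ih]

lemma outL_apply (x₀ : EuclideanSpace ℝ ι) (a : ℕ → EuclideanSpace ℝ κ) (k : ℕ) :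
    outL A B C D k (x₀, a) = outTraj A B C D x₀ a k := by
  simp [outL, outTraj, stateL_apply]

lemma stateTraj_superpose (x y : EuclideanSpace ℝ ι) (a b : ℕ → EuclideanSpace ℝ κ) (k : ℕ) :
    stateTraj A B (x + y) (fun i => a i + b i) k =
      stateTraj A B x a k + stateTraj A B y b k := by
  simp only [← stateL_apply, ← map_add]
  rfl

lemma outTraj_superpose (x y : EuclideanSpace ℝ ι) (a b : ℕ → EuclideanSpace ℝ κ) (k : ℕ) :
    outTraj A B C D (x + y) (fun i => a i + b i) k =
      outTraj A B C D x a k + outTraj A B C D y b k := by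
  simp only [← outL_apply, ← map_add]
  rfl

lemma outTraj_smul (c : ℝ) (a : ℕ → EuclideanSpace ℝ κ) (k : ℕ) :
    outTraj A B C D 0 (fun i => c • a i) k = c • outTraj A B C D 0 a k := by
  simp only [← outL_apply, ← map_smul]
  congr 1
  ext <;> simp

/-- Writing the input as `a = M x + w` turns the system into the closed-loop system driven
by `w`. -/
lemma stateTraj_feedback (M : Matrix κ ι ℝ) (x₀ : EuclideanSpace ℝ ι)
    (a : ℕ → EuclideanSpace ℝ κ) (k : ℕ) :
    stateTraj A B x₀ a k = stateTraj (A + B * M) B x₀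
      (fun i => a i - matL M (stateTraj A B x₀ a i)) k := by
  induction k with
  | zero => rfl
  | succ k ih =>
    simp only [stateTraj]
    rw [← ih, matL_add_apply, matL_mul_apply, map_sub]
    abel

lemma outTraj_feedback (M : Matrix κ ι ℝ) (x₀ : EuclideanSpace ℝ ι)
    (a : ℕ → EuclideanSpace ℝ κ) (k : ℕ) :
    outTraj A B C D x₀ a k = matL (C + D * M) (stateTraj A B x₀ a k) +
      matL D (a k - matL M (stateTraj A B x₀ a k)) := by
  rw [outTraj, matL_add_apply, matL_mul_apply, map_sub]
  abel

/-- The closed-loop input `a = M x + w` realising a prescribed `w`. -/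
lemma exists_closedLoop (M : Matrix κ ι ℝ) (x₀ : EuclideanSpace ℝ ι)
    (w : ℕ → EuclideanSpace ℝ κ) :
    ∃ a : ℕ → EuclideanSpace ℝ κ,
      (∀ k, stateTraj A B x₀ a k = stateTraj (A + B * M) B x₀ w k) ∧
      ∀ k, a k = matL M (stateTraj A B x₀ a k) + w k := by
  let a : ℕ → EuclideanSpace ℝ κ := fun k => matL M (stateTraj (A + B * M) B x₀ w k) + w k
  have h : ∀ k, stateTraj A B x₀ a k = stateTraj (A + B * M) B x₀ w k := by
    intro k
    induction k with
    | zero => rfl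
    | succ k ih =>
      simp only [stateTraj]
      rw [ih, matL_add_apply, matL_mul_apply, map_add]
      abel
  exact ⟨a, h, fun k => by rw [h]⟩

/-- The outputs at times `0, …, N` as one linear map. -/
def outWindow (N : ℕ) :
    (EuclideanSpace ℝ ι × (ℕ → EuclideanSpace ℝ κ)) →ₗ[ℝ] (Fin (N + 1) → EuclideanSpace ℝ ρ) :=
  LinearMap.pi fun k => outL A B C D k

lemma outWindow_eq_zero_iff (N : ℕ) (x₀ : EuclideanSpace ℝ ι) (a : ℕ → EuclideanSpace ℝ κ) :
    outWindow A B C D N (x₀, a) = 0 ↔ ∀ k ≤ N, outTraj A B C D x₀ a k = 0 := by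
  rw [funext_iff]
  constructor
  · intro h k hk
    simpa [outWindow, outL_apply] using h ⟨k, Nat.lt_succ_of_le hk⟩
  · intro h k
    simpa [outWindow, outL_apply] using h k (Nat.le_of_lt_succ k.2)

variable {A B C D}

/-- The initial states whose output can be kept at zero on `0, …, N` form a decreasing chain of
subspaces. Where the chain stabilizes it is output-nulling, hence inside `V`. -/
lemma mem_of_output_zero {V : Submodule ℝ (EuclideanSpace ℝ ι)}
    (hV : IsMaxOutputNulling A B C D V) :
    ∃ N : ℕ, ∀ x₀ a, (∀ k ≤ N, outTraj A B C D x₀ a k = 0) → x₀ ∈ V := by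
  let S : ℕ → Submodule ℝ (EuclideanSpace ℝ ι) := fun N =>
    (LinearMap.ker (outWindow A B C D N)).map (LinearMap.fst ℝ _ _)
  have hS : ∀ N x, x ∈ S N ↔ ∃ a, ∀ k ≤ N, outTraj A B C D x a k = 0 := by
    intro N x
    constructor
    · rintro ⟨⟨x', a⟩, h, rfl⟩
      exact ⟨a, (outWindow_eq_zero_iff A B C D N x' a).1 h⟩
    · rintro ⟨a, h⟩
      exact ⟨(x, a), (outWindow_eq_zero_iff A B C D N x a).2 h, rfl⟩
  have hanti : Antitone S := fun N N' h x hx => by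
    obtain ⟨a, ha⟩ := (hS N' x).1 hx
    exact (hS N x).2 ⟨a, fun k hk => ha k (hk.trans h)⟩
  obtain ⟨N, hN⟩ := IsArtinian.monotone_stabilizes
    (⟨fun N => OrderDual.toDual (S N), fun _ _ h => hanti h⟩ :
      ℕ →o (Submodule ℝ (EuclideanSpace ℝ ι))ᵒᵈ)
  have hstab : S N = S (N + 1) := hN (N + 1) (Nat.le_succ N)
  refine ⟨N, fun x₀ a h => hV.2 (S N) ?_ ((hS N x₀).2 ⟨a, h⟩)⟩
  let R : Submodule ℝ (EuclideanSpace ℝ ι × EuclideanSpace ℝ κ) :=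
    (S N).comap ((matL A).coprod (matL B)) ⊓ LinearMap.ker ((matL C).coprod (matL D))
  obtain ⟨f, hf⟩ := exists_linear_selection (S N) R (by
    intro x hx
    rw [hstab] at hx
    obtain ⟨b, hb⟩ := (hS (N + 1) x).1 hx
    refine ⟨b 0, Submodule.mem_inf.2 ⟨?_, ?_⟩⟩
    · refine (hS N _).2 ⟨fun i => b (1 + i), fun k hk => ?_⟩
      have := hb (1 + k) (by omega)
      rw [outTraj_add] at this
      simpa [stateTraj] using this
    · have := hb 0 (Nat.zero_le _)
      simpa [outTraj, stateTraj] using this)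
  obtain ⟨M, rfl⟩ := exists_matL_eq f
  refine ⟨M, fun v hv => ?_, fun v hv => ?_⟩
  · have := (Submodule.mem_inf.1 (hf v hv)).1
    rw [matL_add_apply, matL_mul_apply]
    simpa using this
  · have := (Submodule.mem_inf.1 (hf v hv)).2
    rw [matL_add_apply, matL_mul_apply]
    simpa using this

/-- A linear function of (state, input) that vanishes whenever the output vanishes on a window is
bounded by the output on that window. -/
lemma exists_bound_of_window {Z : Type*} [NormedAddCommGroup Z] [NormedSpace ℝ Z] (N : ℕ)
    (G : (EuclideanSpace ℝ ι × (ℕ → EuclideanSpace ℝ κ)) →ₗ[ℝ] Z)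
    (hG : ∀ x a, (∀ k ≤ N, outTraj A B C D x a k = 0) → G (x, a) = 0) :
    ∃ K : ℝ, 0 ≤ K ∧ ∀ x a, (∀ k ≤ N, ‖outTraj A B C D x a k‖ ≤ 1) → ‖G (x, a)‖ ≤ K := by
  obtain ⟨K, hK0, hK⟩ := exists_bound_of_ker_le (outWindow A B C D N) G
    (fun p hp => hG p.1 p.2 ((outWindow_eq_zero_iff A B C D N p.1 p.2).1 hp))
  refine ⟨K, hK0, fun x a h => (hK (x, a)).trans ?_⟩
  have : ‖outWindow A B C D N (x, a)‖ ≤ 1 := by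
    refine (pi_norm_le_iff_of_nonneg zero_le_one).2 fun k => ?_
    simpa [outWindow, outL_apply] using h k (Nat.le_of_lt_succ k.2)
  nlinarith

end Trajectories

/-! ### The controllable subspace -/

section Controllability

variable {n m p : ℕ} {A : Matrix (Fin n) (Fin n) ℝ} {B : Matrix (Fin n) (Fin m) ℝ}

lemma matL_pow_mul_mem_ctrl (hn : 0 < n) (k : ℕ) (u : EuclideanSpace ℝ (Fin m)) :
    matL (A ^ k * B) u ∈ ctrlSubspace A B := by
  obtain ⟨c, hc⟩ := pow_eq_sum_range hn A k
  have h : matL (A ^ k * B) u = ∑ j ∈ Finset.range n, c j • matL (A ^ j * B) u := by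
    rw [hc, Matrix.sum_mul]
    simp [matL]
  rw [h]
  refine Submodule.sum_mem _ fun j hj => Submodule.smul_mem _ _ ?_
  exact Submodule.mem_iSup_of_mem (⟨j, Finset.mem_range.1 hj⟩ : Fin n) ⟨u, rfl⟩

lemma matL_mem_ctrl (hn : 0 < n) (u : EuclideanSpace ℝ (Fin m)) :
    matL B u ∈ ctrlSubspace A B := by
  simpa using matL_pow_mul_mem_ctrl (A := A) (B := B) hn 0 u

lemma ctrl_invariant (hn : 0 < n) (M : Matrix (Fin m) (Fin n) ℝ)
    {x : EuclideanSpace ℝ (Fin n)} (hx : x ∈ ctrlSubspace A B) :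
    matL (A + B * M) x ∈ ctrlSubspace A B := by
  rw [matL_add_apply, matL_mul_apply]
  refine Submodule.add_mem _ ?_ (matL_mem_ctrl hn _)
  have : ctrlSubspace A B ≤ (ctrlSubspace A B).comap (matL A) := by
    refine iSup_le fun j => ?_
    rintro _ ⟨u, rfl⟩
    rw [Submodule.mem_comap, ← matL_mul_apply, ← Matrix.mul_assoc, ← pow_succ']
    exact matL_pow_mul_mem_ctrl hn _ u
  exact this hx

lemma stateTraj_impulse (u : EuclideanSpace ℝ (Fin m)) (j : ℕ) :
    stateTraj A B 0 (fun i => if i = 0 then u else 0) (j + 1) = matL (A ^ j * B) u := by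
  induction j with
  | zero => simp [stateTraj]
  | succ j ih =>
    rw [stateTraj, ih, ← matL_mul_apply, ← Matrix.mul_assoc, ← pow_succ']
    simp

lemma exists_reaching_input {v : EuclideanSpace ℝ (Fin n)} (hv : v ∈ ctrlSubspace A B) :
    ∃ a, stateTraj A B 0 a n = v := by
  let T : (ℕ → EuclideanSpace ℝ (Fin m)) →ₗ[ℝ] EuclideanSpace ℝ (Fin n) :=
    stateL A B n ∘ₗ LinearMap.inr ℝ _ _
  have : ctrlSubspace A B ≤ LinearMap.range T := by
    refine iSup_le fun j => ?_
    rintro _ ⟨u, rfl⟩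
    refine ⟨fun i => if i = n - 1 - j then u else 0, ?_⟩
    have hj := j.2
    change stateL A B n (0, _) = _
    rw [stateL_apply]
    -- The impulse is applied at time `n - 1 - j`, so that it acts for `j + 1` steps.
    have hs : stateTraj A B 0 (fun i => if i = n - 1 - (j : ℕ) then u else 0)
        ((n - 1 - j) + (j + 1)) = matL (A ^ (j : ℕ) * B) u := by
      rw [stateTraj_add, stateTraj_congr A B 0 (b := fun _ => 0) (n - 1 - j)
        (fun i hi => if_neg (by omega))]
      have h0 : stateTraj A B 0 (fun _ => 0) (n - 1 - j) = 0 :=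
        (Submodule.mem_bot ℝ).1 (stateTraj_mem A B ⊥ (Submodule.zero_mem _)
          (fun v hv => by simp_all) (fun _ => by simp) _)
      rw [h0, ← stateTraj_impulse u j]
      refine stateTraj_congr A B 0 _ fun i _ => ?_
      simp
    rwa [show (n - 1 - j) + ((j : ℕ) + 1) = n by omega] at hs
  obtain ⟨a, ha⟩ := this hv
  exact ⟨a, by rw [← stateL_apply]; exact ha⟩

/-- Controllable states are reached in `n` steps with outputs proportional to their norm. -/
lemma exists_reaching_input_bound (C : Matrix (Fin p) (Fin n) ℝ) (D : Matrix (Fin p) (Fin m) ℝ) :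
    ∃ K : ℝ, 0 ≤ K ∧ ∀ v ∈ ctrlSubspace A B, ∃ a, stateTraj A B 0 a n = v ∧
      ∀ k < n, ‖outTraj A B C D 0 a k‖ ≤ K * ‖v‖ := by
  let R : Submodule ℝ (EuclideanSpace ℝ (Fin n) × (ℕ → EuclideanSpace ℝ (Fin m))) :=
    LinearMap.ker (LinearMap.fst ℝ _ _ - stateL A B n ∘ₗ LinearMap.inr ℝ _ _ ∘ₗ
      LinearMap.snd ℝ _ _)
  have hR : ∀ v a, (v, a) ∈ R ↔ v = stateTraj A B 0 a n := fun v a => by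
    rw [← stateL_apply, ← sub_eq_zero]
    rfl
  obtain ⟨s, hs⟩ := exists_linear_selection (ctrlSubspace A B) R fun v hv => by
    obtain ⟨a, ha⟩ := exists_reaching_input hv
    exact ⟨a, (hR v a).2 ha.symm⟩
  obtain ⟨K, hK0, hK⟩ := exists_bound_of_ker_le LinearMap.id
    (outWindow A B C D n ∘ₗ LinearMap.inr ℝ _ _ ∘ₗ s) fun x hx => by
      rw [show x = 0 from hx, map_zero]
  refine ⟨K, hK0, fun v hv => ⟨s v, ((hR v _).1 (hs v hv)).symm, fun k hk => ?_⟩⟩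
  refine le_trans ?_ (hK v)
  have := norm_le_pi_norm (outWindow A B C D n (0, s v)) ⟨k, hk.trans (Nat.lt_succ_self n)⟩
  simpa [outWindow, outL_apply] using this

end Controllability

/-! ### Undetected attacks -/

section Vulnerable

variable {n m p r : ℕ} {A : Matrix (Fin n) (Fin n) ℝ} {B : Matrix (Fin n) (Fin m) ℝ}
  {C : Matrix (Fin p) (Fin n) ℝ} {D : Matrix (Fin p) (Fin m) ℝ}
  {E : Matrix (Fin r) (Fin n) ℝ} {F : Matrix (Fin r) (Fin m) ℝ}

lemma not_detectable_of_zero_output (a : ℕ → EuclideanSpace ℝ (Fin m))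
    (hy : ∀ k, outTraj A B C D 0 a k = 0) {k : ℕ} (hz : outTraj A B E F 0 a k ≠ 0) :
    ¬ Detectable A B C D E F := by
  rintro ⟨δ, hδ, ε, hε, h⟩
  have hpos : 0 < ‖outTraj A B E F 0 a k‖ := norm_pos_iff.2 hz
  obtain ⟨ky, hky⟩ := h (fun i => (δ / ‖outTraj A B E F 0 a k‖) • a i) ⟨k, by
    rw [outTraj_smul, norm_smul, Real.norm_of_nonneg (by positivity), div_mul_cancel₀ _ hpos.ne']⟩
  rw [outTraj_smul, hy, smul_zero, norm_zero] at hky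
  linarith

lemma not_detectable_of_kernel
    (h : ¬ (LinearMap.ker (matL B) ⊓ LinearMap.ker (matL D) ≤ LinearMap.ker (matL F))) :
    ¬ Detectable A B C D E F := by
  obtain ⟨u, hu, huF⟩ := SetLike.not_le_iff_exists.1 h
  obtain ⟨huB, huD⟩ := Submodule.mem_inf.1 hu
  have h0 : ∀ k, stateTraj A B 0 (fun _ => u) k = 0 := fun k =>
    (Submodule.mem_bot ℝ).1 (stateTraj_mem A B ⊥ (Submodule.zero_mem _)
      (fun v hv => by simp_all) (fun _ => by simpa using huB) k)
  refine not_detectable_of_zero_output (fun _ => u) (fun k => ?_) (k := 0) ?_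
  · rw [outTraj, h0, map_zero, zero_add]
    exact huD
  · rw [outTraj, h0, map_zero, zero_add]
    exact huF

lemma not_detectable_of_impulse {V : Submodule ℝ (EuclideanSpace ℝ (Fin n))} {s : ℕ}
    {M : Matrix (Fin m) (Fin n) ℝ} {N : Matrix (Fin m) (Fin s) ℝ}
    (hMN : IsFriend A B C D V M N)
    (h : F * N ≠ 0 ∨ ∃ j : ℕ, j < n ∧ (E + F * M) * (A + B * M) ^ j * (B * N) ≠ 0) :
    ¬ Detectable A B C D E F := by
  obtain ⟨hinv, hnull, hND, hBN⟩ := hMN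
  have key : ∀ u : EuclideanSpace ℝ (Fin s), ∃ a, (∀ k, outTraj A B C D 0 a k = 0) ∧
      outTraj A B E F 0 a 0 = matL (F * N) u ∧
      ∀ j, outTraj A B E F 0 a (j + 1) =
        matL ((E + F * M) * (A + B * M) ^ j * (B * N)) u := by
    intro u
    obtain ⟨a, ha, haw⟩ := exists_closedLoop A B M 0 (fun i => if i = 0 then matL N u else 0)
    have hw : ∀ k, a k - matL M (stateTraj A B 0 a k) = if k = 0 then matL N u else 0 := by
      intro k
      rw [sub_eq_iff_eq_add', haw k]
    have hNu : matL D (matL N u) = 0 := hND ⟨u, rfl⟩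
    have hBNu : matL B (matL N u) ∈ V := by
      have : matL (B * N) u ∈ LinearMap.range (matL (B * N)) := ⟨u, rfl⟩
      rw [hBN, matL_mul_apply] at this
      exact (Submodule.mem_inf.1 this).2
    refine ⟨a, fun k => ?_, ?_, fun j => ?_⟩
    · rw [outTraj_feedback A B C D M, hw, hnull _ (by
        rw [ha]
        refine stateTraj_mem _ _ V V.zero_mem hinv (fun i => ?_) k
        split_ifs
        · exact hBNu
        · simp), zero_add]
      split_ifs
      · exact hNu
      · simp
    · rw [outTraj_feedback A B E F M, hw]
      simp [stateTraj, matL_mul_apply]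
    · rw [outTraj_feedback A B E F M, hw, ha, stateTraj_impulse]
      simp [matL_mul_apply]
  rcases h with h | ⟨j, -, h⟩
  · rw [Ne, matL_eq_zero_iff] at h
    push Not at h
    obtain ⟨u, hu⟩ := h
    obtain ⟨a, hy, hz, -⟩ := key u
    exact not_detectable_of_zero_output a hy (k := 0) (by rwa [hz])
  · rw [Ne, matL_eq_zero_iff] at h
    push Not at h
    obtain ⟨u, hu⟩ := h
    obtain ⟨a, hy, -, hz⟩ := key u
    exact not_detectable_of_zero_output a hy (k := j + 1) (by rwa [hz])

lemma stateTraj_zero_input (x : EuclideanSpace ℝ (Fin n)) (k : ℕ) :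
    stateTraj A B x (fun _ => 0) k = matL (A ^ k) x := by
  induction k with
  | zero => rw [pow_zero, matL_one_apply]; rfl
  | succ k ih => rw [stateTraj, ih, pow_succ', matL_mul_apply, map_zero, add_zero]

/-- `x` can be reached from the origin in finite time while the output stays below `ε`. -/
def StealthReachable (A : Matrix (Fin n) (Fin n) ℝ) (B : Matrix (Fin n) (Fin m) ℝ)
    (C : Matrix (Fin p) (Fin n) ℝ) (D : Matrix (Fin p) (Fin m) ℝ) (ε : ℝ)
    (x : EuclideanSpace ℝ (Fin n)) : Prop :=
  ∃ (T : ℕ) (a : ℕ → EuclideanSpace ℝ (Fin m)), stateTraj A B 0 a T = x ∧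
    ∀ k < T, ‖outTraj A B C D 0 a k‖ ≤ ε

lemma exists_concat (T : ℕ) (a b : ℕ → EuclideanSpace ℝ (Fin m)) :
    ∃ c : ℕ → EuclideanSpace ℝ (Fin m), (∀ i < T, c i = a i) ∧ ∀ i, c (T + i) = b i :=
  ⟨fun i => if i < T then a i else b (i - T), fun i hi => if_pos hi, fun i => by simp⟩

/-- Continuing a stealthy trajectory from time `T` on by the input `b`. -/
lemma StealthReachable.extend {ε : ℝ} {x : EuclideanSpace ℝ (Fin n)}
    (hx : StealthReachable A B C D ε x) (b : ℕ → EuclideanSpace ℝ (Fin m)) :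
    ∃ (T : ℕ) (c : ℕ → EuclideanSpace ℝ (Fin m)),
      (∀ k < T, ‖outTraj A B C D 0 c k‖ ≤ ε) ∧
      (∀ j, stateTraj A B 0 c (T + j) = stateTraj A B x b j) ∧
      (∀ j, outTraj A B C D 0 c (T + j) = outTraj A B C D x b j) ∧
      (∀ j, outTraj A B E F 0 c (T + j) = outTraj A B E F x b j) := by
  obtain ⟨T, a, hT, ha⟩ := hx
  obtain ⟨c, hca, hcb⟩ := exists_concat T a b
  have hcb' : (fun i => c (T + i)) = b := funext hcb
  have hcT : stateTraj A B 0 c T = x := by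
    rw [stateTraj_congr A B 0 T hca, hT]
  refine ⟨T, c, fun k hk => ?_, fun j => ?_, fun j => ?_, fun j => ?_⟩
  · rw [outTraj, stateTraj_congr A B 0 k fun i hi => hca i (hi.trans hk), hca k hk]
    exact ha k hk
  · rw [stateTraj_add, hcT, hcb']
  · rw [outTraj_add, hcT, hcb']
  · rw [outTraj_add, hcT, hcb']

section Friend

variable {V : Submodule ℝ (EuclideanSpace ℝ (Fin n))} {M : Matrix (Fin m) (Fin n) ℝ}

/-- From a state in `V` the feedback `M` keeps the output at zero. -/
lemma exists_silent_input
    (hinv : ∀ v ∈ V, matL (A + B * M) v ∈ V) (hnull : ∀ v ∈ V, matL (C + D * M) v = 0)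
    {x : EuclideanSpace ℝ (Fin n)} (hx : x ∈ V) :
    ∃ a, (∀ k, stateTraj A B x a k = matL ((A + B * M) ^ k) x) ∧
      (∀ k, outTraj A B C D x a k = 0) ∧ outTraj A B E F x a 0 = matL (E + F * M) x := by
  obtain ⟨a, ha, haw⟩ := exists_closedLoop A B M x (fun _ => 0)
  have hw : ∀ k, a k - matL M (stateTraj A B x a k) = 0 := fun k => by
    rw [sub_eq_iff_eq_add', haw k]
  refine ⟨a, fun k => by rw [ha, stateTraj_zero_input], fun k => ?_, ?_⟩
  · rw [outTraj_feedback A B C D M, hw, map_zero, add_zero, ha]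
    exact hnull _ (stateTraj_mem _ _ V hx hinv (fun _ => by simp) k)
  · rw [outTraj_feedback A B E F M, hw, map_zero, add_zero]
    rfl

/-- One block of `n` steps: the feedback `M` transports the present state along `V` while an
open-loop pulse adds the controllable state `v`. Only the pulse shows in the output. -/
lemma StealthReachable.step {ε K : ℝ}
    (hinv : ∀ v ∈ V, matL (A + B * M) v ∈ V) (hnull : ∀ v ∈ V, matL (C + D * M) v = 0)
    (hK : ∀ v ∈ ctrlSubspace A B, ∃ a, stateTraj A B 0 a n = v ∧
      ∀ k < n, ‖outTraj A B C D 0 a k‖ ≤ K * ‖v‖)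
    {x v : EuclideanSpace ℝ (Fin n)} (hx : StealthReachable A B C D ε x) (hxV : x ∈ V)
    (hv : v ∈ ctrlSubspace A B) (hvε : K * ‖v‖ ≤ ε) :
    StealthReachable A B C D ε (v + matL ((A + B * M) ^ n) x) := by
  obtain ⟨b, hb, hbo⟩ := hK v hv
  obtain ⟨a, ha, hao, -⟩ := exists_silent_input (E := C) (F := D) hinv hnull hxV
  obtain ⟨T, c, hc, hcs, hco, -⟩ := hx.extend (E := C) (F := D) (fun i => b i + a i)
  refine ⟨T + n, c, ?_, fun k hk => ?_⟩
  · have := stateTraj_superpose A B 0 x b a n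
    rw [zero_add] at this
    rw [hcs, this, hb, ha]
  · by_cases hkT : k < T
    · exact hc k hkT
    · obtain ⟨j, rfl⟩ := Nat.exists_eq_add_of_le (not_lt.1 hkT)
      have := outTraj_superpose A B C D 0 x b a j
      rw [zero_add] at this
      rw [hco, this, hao, add_zero]
      exact (hbo j (by omega)).trans hvε

lemma stealthReachable_sum {ε K : ℝ}
    (hinv : ∀ v ∈ V, matL (A + B * M) v ∈ V) (hnull : ∀ v ∈ V, matL (C + D * M) v = 0)
    (hK : ∀ v ∈ ctrlSubspace A B, ∃ a, stateTraj A B 0 a n = v ∧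
      ∀ k < n, ‖outTraj A B C D 0 a k‖ ≤ K * ‖v‖) (J : ℕ) :
    ∀ v : ℕ → EuclideanSpace ℝ (Fin n), (∀ j, v j ∈ V ⊓ ctrlSubspace A B) →
      (∀ j, K * ‖v j‖ ≤ ε) →
      StealthReachable A B C D ε (∑ j ∈ Finset.range J, matL ((A + B * M) ^ (n * j)) (v j)) ∧
      ∑ j ∈ Finset.range J, matL ((A + B * M) ^ (n * j)) (v j) ∈ V := by
  induction J with
  | zero =>
    intro v _ _
    simp only [Finset.range_zero, Finset.sum_empty]
    exact ⟨⟨0, fun _ => 0, rfl, fun k hk => absurd hk (Nat.not_lt_zero k)⟩, V.zero_mem⟩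
  | succ J ih =>
    intro v hv hvε
    obtain ⟨h1, h2⟩ := ih (fun j => v (j + 1)) (fun j => hv _) (fun j => hvε _)
    have heq : ∑ j ∈ Finset.range (J + 1), matL ((A + B * M) ^ (n * j)) (v j) =
        v 0 + matL ((A + B * M) ^ n)
          (∑ j ∈ Finset.range J, matL ((A + B * M) ^ (n * j)) (v (j + 1))) := by
      rw [Finset.sum_range_succ', map_sum, mul_zero, pow_zero, matL_one_apply, add_comm]
      congr 1
      refine Finset.sum_congr rfl fun j _ => ?_
      rw [← matL_mul_apply, ← pow_add]
      congr 3
      ring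
    rw [heq]
    refine ⟨StealthReachable.step hinv hnull hK h1 h2 (Submodule.mem_inf.1 (hv 0)).2 (hvε 0), ?_⟩
    refine V.add_mem (Submodule.mem_inf.1 (hv 0)).1 ?_
    rw [← stateTraj_zero_input (B := B)]
    exact stateTraj_mem _ _ V h2 hinv (fun _ => by simp) n

/-- Repeated small pulses, tuned to a visible mode with `1 ≤ ‖lam‖`, pile up an arbitrarily large
impact while the output stays below any given level. -/
lemma not_detectable_of_resonance
    (hinv : ∀ v ∈ V, matL (A + B * M) v ∈ V) (hnull : ∀ v ∈ V, matL (C + D * M) v = 0)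
    {d : ℕ} {Vst : Matrix (Fin n) (Fin d) ℝ}
    (hVst : LinearMap.range (matL Vst) = V ⊓ ctrlSubspace A B)
    {Φ : Matrix (Fin d) (Fin d) ℝ} (hΦ : (A + B * M) * Vst = Vst * Φ)
    {lam : ℂ} (hlam : 1 ≤ ‖lam‖)
    (hf : ¬ Module.End.maxGenEigenspace (Matrix.mulVecLin (Φ.map (algebraMap ℝ ℂ))) lam ≤
        LinearMap.ker (Matrix.mulVecLin (((E + F * M) * Vst).map (algebraMap ℝ ℂ)))) :
    ¬ Detectable A B C D E F := by
  rintro ⟨δ, hδ, ε, hε, hdet⟩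
  obtain ⟨h₀, hh₀, R, hR, hres⟩ := exists_resonance Φ ((E + F * M) * Vst) hlam hf
  choose ξ hξ t ht hξt using hres
  obtain ⟨K, hK0, hK⟩ := exists_reaching_input_bound (A := A) (B := B) C D
  obtain ⟨L, hL0, hL⟩ := norm_matL_bound Vst
  have hpow : ∀ i : ℕ, (A + B * M) ^ i * Vst = Vst * Φ ^ i := by
    intro i
    induction i with
    | zero => simp
    | succ i ih => rw [pow_succ, Matrix.mul_assoc, hΦ, ← Matrix.mul_assoc, ih, Matrix.mul_assoc,
        ← pow_succ]
  set c : ℝ := (ε / 2) / (K * (L * R) + 1) with hc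
  have hcpos : 0 < c := by positivity
  have hnorm : 0 < ‖h₀‖ := norm_pos_iff.2 hh₀
  obtain ⟨J, hJ⟩ := exists_nat_ge (δ / (c * ‖h₀‖))
  let v : ℕ → EuclideanSpace ℝ (Fin n) := fun j => c • matL Vst (ξ (n * j))
  have hv : ∀ j, v j ∈ V ⊓ ctrlSubspace A B := fun j => by
    rw [← hVst]
    exact Submodule.smul_mem _ _ ⟨_, rfl⟩
  have hvε : ∀ j, K * ‖v j‖ ≤ ε / 2 := fun j => by
    have h1 : ‖matL Vst (ξ (n * j))‖ ≤ L * R :=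
      (hL _).trans (mul_le_mul_of_nonneg_left (hξ _) hL0)
    have h2 : c * (K * (L * R) + 1) = ε / 2 := div_mul_cancel₀ _ (by positivity)
    calc K * ‖v j‖ = c * (K * ‖matL Vst (ξ (n * j))‖) := by
          simp only [v]
          rw [norm_smul, Real.norm_of_nonneg hcpos.le]
          ring
      _ ≤ c * (K * (L * R) + 1) := by
          gcongr
          nlinarith
      _ = ε / 2 := h2
  obtain ⟨hreach, hmem⟩ := stealthReachable_sum hinv hnull hK J v hv hvε
  obtain ⟨b, -, hb0, hbz⟩ := exists_silent_input (E := E) (F := F) hinv hnull hmem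
  obtain ⟨T, a, haT, -, hay, haz⟩ := hreach.extend (E := E) (F := F) b
  obtain ⟨ky, hky⟩ := hdet a ⟨T + 0, by
    rw [haz, hbz, map_sum]
    have hterm : ∀ j, matL (E + F * M) (matL ((A + B * M) ^ (n * j)) (v j)) =
        (c * t (n * j)) • h₀ := fun j => by
      simp only [v]
      rw [map_smul, map_smul, ← matL_mul_apply ((A + B * M) ^ (n * j)), hpow, ← matL_mul_apply,
        ← Matrix.mul_assoc, hξt, smul_smul]
    simp only [hterm]
    rw [← Finset.sum_smul, norm_smul]
    have hsum : c * J ≤ ∑ j ∈ Finset.range J, c * t (n * j) := by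
      rw [← Finset.mul_sum]
      gcongr
      calc (J : ℝ) = ∑ _j ∈ Finset.range J, (1 : ℝ) := by simp
        _ ≤ _ := Finset.sum_le_sum fun j _ => ht _
    have hJ' : δ ≤ J * (c * ‖h₀‖) := (div_le_iff₀ (by positivity)).1 hJ
    calc δ ≤ c * J * ‖h₀‖ := by linarith
      _ ≤ _ := by
        gcongr
        exact hsum.trans (le_abs_self _)⟩
  have hle : ‖outTraj A B C D 0 a ky‖ ≤ ε / 2 := by
    by_cases hk : ky < T
    · exact haT ky hk
    · obtain ⟨j, rfl⟩ := Nat.exists_eq_add_of_le (not_lt.1 hk)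
      rw [hay, hb0, norm_zero]
      linarith
  linarith

end Friend

end Vulnerable

/-! ### Detectability when no attack mechanism is available -/

section Detect

variable {n m p r d : ℕ} {A : Matrix (Fin n) (Fin n) ℝ} {B : Matrix (Fin n) (Fin m) ℝ}
  {C : Matrix (Fin p) (Fin n) ℝ} {D : Matrix (Fin p) (Fin m) ℝ}
  {E : Matrix (Fin r) (Fin n) ℝ} {F : Matrix (Fin r) (Fin m) ℝ}
  {V : Submodule ℝ (EuclideanSpace ℝ (Fin n))}

lemma exists_friend (hV : IsOutputNulling A B C D V) :
    ∃ (M : Matrix (Fin m) (Fin n) ℝ) (N : Matrix (Fin m) (Fin m) ℝ), IsFriend A B C D V M N := by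
  obtain ⟨M, hinv, hnull⟩ := hV
  obtain ⟨P, hP, hP'⟩ := exists_linear_proj (LinearMap.ker (matL D) ⊓ V.comap (matL B))
  obtain ⟨N, rfl⟩ := exists_matL_eq P
  refine ⟨M, N, hinv, hnull, ?_, le_antisymm ?_ ?_⟩
  · rintro _ ⟨u, rfl⟩
    exact (Submodule.mem_inf.1 (hP u)).1
  · rintro _ ⟨u, rfl⟩
    rw [matL_mul_apply]
    obtain ⟨h1, h2⟩ := Submodule.mem_inf.1 (hP u)
    exact Submodule.mem_inf.2 ⟨⟨_, h1, rfl⟩, h2⟩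
  · rintro _ ⟨⟨u, hu, rfl⟩, huV⟩
    exact ⟨u, by rw [matL_mul_apply, hP' u (Submodule.mem_inf.2 ⟨hu, huV⟩)]⟩

/-- Inputs that are invisible modulo `V` (`D u = 0` and `B u ∈ V`) have no impact if the friend
has zero impulse response and `ker B ∩ ker D ⊆ ker F`. -/
lemma invisible_input_no_impact (hn : 0 < n) {s : ℕ} {M : Matrix (Fin m) (Fin n) ℝ}
    {N : Matrix (Fin m) (Fin s) ℝ} (hMN : IsFriend A B C D V M N)
    (hker : LinearMap.ker (matL B) ⊓ LinearMap.ker (matL D) ≤ LinearMap.ker (matL F))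
    (hFN : F * N = 0) (himp : ∀ j < n, (E + F * M) * (A + B * M) ^ j * (B * N) = 0)
    {u : EuclideanSpace ℝ (Fin m)} (huD : matL D u = 0) (huB : matL B u ∈ V) :
    matL F u = 0 ∧ ∀ j, matL (E + F * M) (matL ((A + B * M) ^ j) (matL B u)) = 0 := by
  obtain ⟨hinv, hnull, hND, hBN⟩ := hMN
  have hmem : matL B u ∈ LinearMap.range (matL (B * N)) := by
    rw [hBN]
    exact Submodule.mem_inf.2 ⟨⟨u, huD, rfl⟩, huB⟩
  obtain ⟨t, ht⟩ := hmem
  constructor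
  · have h1 : u - matL N t ∈ LinearMap.ker (matL F) := by
      refine hker (Submodule.mem_inf.2 ⟨?_, ?_⟩)
      · rw [LinearMap.mem_ker, map_sub, ← matL_mul_apply, ht, sub_self]
      · rw [LinearMap.mem_ker, map_sub, huD, show matL D (matL N t) = 0 from hND ⟨t, rfl⟩,
          sub_self]
    rw [LinearMap.mem_ker, map_sub, ← matL_mul_apply, (matL_eq_zero_iff _).1 hFN, sub_zero] at h1
    exact h1
  · intro j
    obtain ⟨c, hc⟩ := pow_eq_sum_range hn (A + B * M) j
    have h0 : (E + F * M) * (A + B * M) ^ j * (B * N) = 0 := by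
      rw [hc, Matrix.mul_sum, Matrix.sum_mul]
      refine Finset.sum_eq_zero fun i hi => ?_
      rw [Matrix.mul_smul, Matrix.smul_mul, himp i (Finset.mem_range.1 hi), smul_zero]
    rw [← ht, ← matL_mul_apply, ← matL_mul_apply, (matL_eq_zero_iff _).1 h0]

/-- A summable impulse response turns bounded inputs into bounded outputs. -/
lemma bounded_response {Q P : Matrix (Fin n) (Fin n) ℝ} {T : Matrix (Fin r) (Fin n) ℝ}
    (hsum : ∀ u, Summable fun i : ℕ => ‖matL T (matL (P ^ i) (matL Q u))‖) :
    ∃ K : ℝ, 0 ≤ K ∧ ∀ g : ℕ → EuclideanSpace ℝ (Fin n), ∀ G : ℝ, (∀ k, ‖g k‖ ≤ G) →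
      ∀ k, ‖matL T (stateTraj P Q 0 g k)‖ ≤ G * K := by
  let c : ℕ → ℝ := fun i =>
    ∑ l, ‖matL T (matL (P ^ i) (matL Q (EuclideanSpace.basisFun (Fin n) ℝ l)))‖
  have hc0 : ∀ i, 0 ≤ c i := fun i => Finset.sum_nonneg fun l _ => norm_nonneg _
  have hc : Summable c := summable_sum fun l _ => hsum _
  refine ⟨∑' i, c i, tsum_nonneg hc0, fun g G hg k => ?_⟩
  have hG : 0 ≤ G := (norm_nonneg _).trans (hg 0)
  have hstep : ∀ i k, ‖matL T (matL (P ^ i) (matL Q (g k)))‖ ≤ G * c i := fun i k =>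
    (norm_le_sum_basis (matL T ∘ₗ matL (P ^ i) ∘ₗ matL Q) (g k)).trans
      (mul_le_mul_of_nonneg_right (hg k) (hc0 i))
  have hconv : ∀ k i, ‖matL T (matL (P ^ i) (stateTraj P Q 0 g k))‖ ≤
      G * ∑ j ∈ Finset.range k, c (i + j) := by
    intro k
    induction k with
    | zero => intro i; simp [stateTraj]
    | succ k ih =>
      intro i
      rw [stateTraj, map_add, map_add, ← matL_mul_apply (P ^ i) P, ← pow_succ,
        Finset.sum_range_succ', mul_add, add_zero]
      refine (norm_add_le _ _).trans (add_le_add ?_ (hstep i k))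
      refine (ih (i + 1)).trans (le_of_eq ?_)
      congr 1
      exact Finset.sum_congr rfl fun j _ => by congr 1; ring
  have h := hconv k 0
  rw [pow_zero, matL_one_apply] at h
  refine h.trans (mul_le_mul_of_nonneg_left ?_ hG)
  simp only [zero_add]
  exact hc.sum_le_tsum _ fun i _ => hc0 i

/-- The part of the state transversal to `V` and the part of `w = a - M x` outside `{u | D u = 0, B u ∈ V}`
are bounded in terms of the output: the state from a window of `N + 1` outputs on which vanishing
output forces `x ∈ V`, and `w` from one more output, since `B w` is then the difference of two
elements of `V`. -/
lemma exists_output_bounds (hV : IsMaxOutputNulling A B C D V) {M : Matrix (Fin m) (Fin n) ℝ}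
    (hinv : ∀ v ∈ V, matL (A + B * M) v ∈ V) (hnull : ∀ v ∈ V, matL (C + D * M) v = 0)
    (PV : EuclideanSpace ℝ (Fin n) →ₗ[ℝ] EuclideanSpace ℝ (Fin n)) (hPV : ∀ x ∈ V, PV x = x)
    (PU : EuclideanSpace ℝ (Fin m) →ₗ[ℝ] EuclideanSpace ℝ (Fin m))
    (hPU : ∀ u, matL D u = 0 → matL B u ∈ V → PU u = u) :
    ∃ K : ℝ, 0 ≤ K ∧ ∀ a : ℕ → EuclideanSpace ℝ (Fin m),
      (∀ k, ‖outTraj A B C D 0 a k‖ ≤ 1) → ∀ k,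
        ‖stateTraj A B 0 a k - PV (stateTraj A B 0 a k)‖ ≤ K ∧
        ‖(a k - matL M (stateTraj A B 0 a k)) -
          PU (a k - matL M (stateTraj A B 0 a k))‖ ≤ K := by
  obtain ⟨N, hN⟩ := mem_of_output_zero hV
  let W : (EuclideanSpace ℝ (Fin n) × (ℕ → EuclideanSpace ℝ (Fin m))) →ₗ[ℝ]
      EuclideanSpace ℝ (Fin m) :=
    (LinearMap.proj 0 : (ℕ → EuclideanSpace ℝ (Fin m)) →ₗ[ℝ] EuclideanSpace ℝ (Fin m)) ∘ₗ
      LinearMap.snd ℝ _ _ - matL M ∘ₗ LinearMap.fst ℝ _ _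
  obtain ⟨K₁, hK₁0, hK₁⟩ := exists_bound_of_window (A := A) (B := B) (C := C) (D := D) N
    ((LinearMap.id - PV) ∘ₗ LinearMap.fst ℝ _ _) fun x a h => by
      simp [hPV x (hN x a h)]
  obtain ⟨K₂, hK₂0, hK₂⟩ := exists_bound_of_window (A := A) (B := B) (C := C) (D := D) (N + 1)
    ((LinearMap.id - PU) ∘ₗ W) fun x a h => by
      have hx : x ∈ V := hN x a fun k hk => h k (by omega)
      have hx1 : matL A x + matL B (a 0) ∈ V := by
        refine hN _ (fun i => a (1 + i)) fun k hk => ?_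
        have := h (1 + k) (by omega)
        rwa [outTraj_add] at this
      have hy := h 0 (Nat.zero_le _)
      rw [outTraj_feedback A B C D M] at hy
      simp only [stateTraj] at hy
      rw [hnull x hx, zero_add] at hy
      have hB : matL B (a 0 - matL M x) ∈ V := by
        have := V.sub_mem hx1 (hinv x hx)
        rw [matL_add_apply, matL_mul_apply] at this
        rw [map_sub]
        convert this using 1
        abel
      have := hPU _ hy hB
      simp only [W, LinearMap.comp_apply, LinearMap.sub_apply, LinearMap.fst_apply,
        LinearMap.snd_apply, LinearMap.proj_apply, LinearMap.id_apply]
      rw [this, sub_self]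
  refine ⟨max K₁ K₂, le_max_of_le_left hK₁0, fun a ha k => ?_⟩
  have hshift : ∀ j, ‖outTraj A B C D (stateTraj A B 0 a k) (fun i => a (k + i)) j‖ ≤ 1 :=
    fun j => by rw [← outTraj_add]; exact ha _
  have h1 := hK₁ (stateTraj A B 0 a k) (fun i => a (k + i)) fun j _ => hshift j
  have h2 := hK₂ (stateTraj A B 0 a k) (fun i => a (k + i)) fun j _ => hshift j
  exact ⟨le_max_of_le_left (by simpa using h1), le_max_of_le_right (by simpa [W] using h2)⟩

/-- An output bounded by `1` forces a bounded impact. The input beyond the feedback splits into a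
bounded part `w'` and an invisible part without impact. The state `x'` driven by `w'` is
controllable and boundedly close to `V ⊓ ctrlSubspace A B`; its component there obeys the closed-loop
dynamics with bounded forcing, and the restricted impulse response is summable. -/
lemma detectable_of_no_attack (hn : 0 < n) (hV : IsMaxOutputNulling A B C D V)
    {Vst : Matrix (Fin n) (Fin d) ℝ}
    (hVst : LinearMap.range (matL Vst) = V ⊓ ctrlSubspace A B)
    {s : ℕ} {M : Matrix (Fin m) (Fin n) ℝ} {N : Matrix (Fin m) (Fin s) ℝ}
    (hMN : IsFriend A B C D V M N)
    (hker : LinearMap.ker (matL B) ⊓ LinearMap.ker (matL D) ≤ LinearMap.ker (matL F))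
    (hFN : F * N = 0) (himp : ∀ j < n, (E + F * M) * (A + B * M) ^ j * (B * N) = 0)
    {Φ : Matrix (Fin d) (Fin d) ℝ} (hΦ : (A + B * M) * Vst = Vst * Φ)
    (hspec : ∀ lam : ℂ, 1 ≤ ‖lam‖ →
      Module.End.maxGenEigenspace (Matrix.mulVecLin (Φ.map (algebraMap ℝ ℂ))) lam ≤
        LinearMap.ker (Matrix.mulVecLin (((E + F * M) * Vst).map (algebraMap ℝ ℂ)))) :
    Detectable A B C D E F := by
  have hinv := hMN.1
  have hnull := hMN.2.1
  obtain ⟨PV, hPVmem, hPV⟩ := exists_linear_proj V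
  obtain ⟨PU, hPUmem, hPU⟩ := exists_linear_proj (LinearMap.ker (matL D) ⊓ V.comap (matL B))
  obtain ⟨Q', hQmem, hQ⟩ := exists_linear_proj (V ⊓ ctrlSubspace A B)
  obtain ⟨Q, rfl⟩ := exists_matL_eq Q'
  obtain ⟨K, hK0, hK⟩ := exists_output_bounds hV hinv hnull PV hPV PU
    fun u h1 h2 => hPU u (Submodule.mem_inf.2 ⟨h1, h2⟩)
  -- On the controllable subspace, the distance to `V ⊓ ctrlSubspace A B` is controlled by the
  -- distance to `V`.
  obtain ⟨L, hL0, hL⟩ := exists_bound_of_ker_le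
    ((LinearMap.id - PV) ∘ₗ (ctrlSubspace A B).subtype)
    ((LinearMap.id - matL Q) ∘ₗ (ctrlSubspace A B).subtype) fun x hx => by
      have hxV : (x : EuclideanSpace ℝ (Fin n)) ∈ V := by
        have : (x : EuclideanSpace ℝ (Fin n)) = PV x := sub_eq_zero.1 hx
        rw [this]
        exact hPVmem _
      exact sub_eq_zero.2 (hQ _ (Submodule.mem_inf.2 ⟨hxV, x.2⟩)).symm
  have hpow : ∀ i : ℕ, (A + B * M) ^ i * Vst = Vst * Φ ^ i := by
    intro i
    induction i with
    | zero => simp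
    | succ i ih => rw [pow_succ, Matrix.mul_assoc, hΦ, ← Matrix.mul_assoc, ih, Matrix.mul_assoc,
        ← pow_succ]
  obtain ⟨R, hR0, hR⟩ := bounded_response (Q := Q) (P := A + B * M) (T := E + F * M) fun u => by
    have hu : matL Q u ∈ LinearMap.range (matL Vst) := by
      rw [hVst]
      exact hQmem u
    obtain ⟨ξ, hξ⟩ := hu
    refine (summable_real_orbit Φ ((E + F * M) * Vst) hspec ξ).congr fun i => ?_
    rw [← hξ, ← matL_mul_apply ((A + B * M) ^ i), hpow, ← matL_mul_apply, Matrix.mul_assoc]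
  obtain ⟨KA, hKA0, hKA⟩ := norm_matL_bound (A + B * M)
  obtain ⟨KB, hKB0, hKB⟩ := norm_matL_bound B
  obtain ⟨KE, hKE0, hKE⟩ := norm_matL_bound (E + F * M)
  obtain ⟨KF, hKF0, hKF⟩ := norm_matL_bound F
  set G : ℝ := KA * (L * K) + KB * K with hG
  refine ⟨G * R + KE * (L * K) + KF * K + 1, by positivity, 1, one_pos, fun a => ?_⟩
  rintro ⟨kz, hkz⟩
  by_contra hcon
  push Not at hcon
  have hbd := hK a fun k => (hcon k).le
  set x := stateTraj A B 0 a with hx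
  -- `w` is the input beyond the feedback `M`; `w'` is its visible part, `w - w'` is invisible
  -- modulo `V`.
  let w : ℕ → EuclideanSpace ℝ (Fin m) := fun k => a k - matL M (x k)
  let w' : ℕ → EuclideanSpace ℝ (Fin m) := fun k => w k - PU (w k)
  let x' := stateTraj (A + B * M) B 0 w'
  let x'' := stateTraj (A + B * M) B 0 fun k => PU (w k)
  have hxw : ∀ k, x k = x' k + x'' k := fun k => by
    have := stateTraj_superpose (A + B * M) B 0 0 w' (fun k => PU (w k)) k
    rw [add_zero] at this
    rw [hx, stateTraj_feedback A B M]
    change _ = stateTraj (A + B * M) B 0 w' k + stateTraj (A + B * M) B 0 (fun k => PU (w k)) k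
    rw [← this]
    congr 1
    funext i
    simp [w', w, hx]
  have hUV : ∀ k, matL D (PU (w k)) = 0 ∧ matL B (PU (w k)) ∈ V := fun k =>
    Submodule.mem_inf.1 (hPUmem (w k))
  have hno := fun k => invisible_input_no_impact hn hMN hker hFN himp (hUV k).1 (hUV k).2
  have hx''V : ∀ k, x'' k ∈ V := stateTraj_mem _ _ V V.zero_mem hinv fun i => (hUV i).2
  have hx''E : ∀ k, matL (E + F * M) (x'' k) = 0 := fun k => by
    let S : Submodule ℝ (EuclideanSpace ℝ (Fin n)) :=
      ⨅ j : ℕ, LinearMap.ker (matL (E + F * M) ∘ₗ matL ((A + B * M) ^ j))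
    have hS : ∀ v, v ∈ S ↔ ∀ j, matL (E + F * M) (matL ((A + B * M) ^ j) v) = 0 := fun v => by
      simp [S, Submodule.mem_iInf]
    have hmem : x'' k ∈ S := by
      refine stateTraj_mem _ _ S S.zero_mem (fun v hv => ?_) (fun i => ?_) k
      · rw [hS] at hv ⊢
        intro j
        rw [← matL_mul_apply ((A + B * M) ^ j), ← pow_succ]
        exact hv _
      · rw [hS]
        exact (hno i).2
    have := (hS _).1 hmem 0
    rwa [pow_zero, matL_one_apply] at this
  have hx'C : ∀ k, x' k ∈ ctrlSubspace A B :=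
    stateTraj_mem _ _ _ (Submodule.zero_mem _) (fun v hv => ctrl_invariant hn M hv)
      fun i => matL_mem_ctrl hn _
  have hq : ∀ k, ‖x' k - matL Q (x' k)‖ ≤ L * K := fun k => by
    refine (hL ⟨x' k, hx'C k⟩).trans (mul_le_mul_of_nonneg_left ?_ hL0)
    have h1 : x' k - PV (x' k) = x k - PV (x k) := by
      rw [hxw, map_add, hPV _ (hx''V k)]
      abel
    change ‖x' k - PV (x' k)‖ ≤ K
    rw [h1]
    exact (hbd k).1
  have hw' : ∀ k, ‖w' k‖ ≤ K := fun k => (hbd k).2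
  let g : ℕ → EuclideanSpace ℝ (Fin n) := fun k =>
    matL (A + B * M) (x' k - matL Q (x' k)) + matL B (w' k)
  have hg : ∀ k, ‖g k‖ ≤ G := fun k =>
    (norm_add_le _ _).trans (add_le_add
      ((hKA _).trans (mul_le_mul_of_nonneg_left (hq k) hKA0))
      ((hKB _).trans (mul_le_mul_of_nonneg_left (hw' k) hKB0)))
  have hv : ∀ k, matL Q (x' k) = stateTraj (A + B * M) Q 0 g k := fun k => by
    induction k with
    | zero => simp [x', stateTraj]
    | succ k ih =>
      have h1 : matL Q (matL (A + B * M) (matL Q (x' k))) = matL (A + B * M) (matL Q (x' k)) := by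
        have := Submodule.mem_inf.1 (hQmem (x' k))
        exact hQ _ (Submodule.mem_inf.2 ⟨hinv _ this.1, ctrl_invariant hn M this.2⟩)
      rw [stateTraj, ← ih, ← h1, ← map_add]
      congr 1
      simp only [g]
      rw [map_sub]
      change matL (A + B * M) (x' k) + matL B (w' k) = _
      abel
  have hz : outTraj A B E F 0 a kz = matL (E + F * M) (matL Q (x' kz)) +
      matL (E + F * M) (x' kz - matL Q (x' kz)) + matL F (w' kz) := by
    rw [outTraj_feedback A B E F M, ← map_add, add_sub_cancel]
    change matL (E + F * M) (x kz) + matL F (w kz) = _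
    rw [hxw, map_add, hx''E, add_zero]
    congr 1
    change _ = matL F (w kz - PU (w kz))
    rw [map_sub (matL F) (w kz), (hno kz).1, sub_zero]
  have hfin : ‖outTraj A B E F 0 a kz‖ ≤ G * R + KE * (L * K) + KF * K := by
    rw [hz]
    refine norm_add₃_le.trans (add_le_add (add_le_add ?_ ?_) ?_)
    · rw [hv]
      exact hR g G hg kz
    · exact (hKE _).trans (mul_le_mul_of_nonneg_left (hq kz) hKE0)
    · exact (hKF _).trans (mul_le_mul_of_nonneg_left (hw' kz) hKF0)
  linarith

/-- The closed-loop matrix restricts to the span `V ⊓ ctrlSubspace A B` of the columns of `Vst`. -/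
lemma exists_restriction (hn : 0 < n) {M : Matrix (Fin m) (Fin n) ℝ}
    (hinv : ∀ v ∈ V, matL (A + B * M) v ∈ V) {Vst : Matrix (Fin n) (Fin d) ℝ}
    (hVst : LinearMap.range (matL Vst) = V ⊓ ctrlSubspace A B) :
    ∃ Φ : Matrix (Fin d) (Fin d) ℝ, (A + B * M) * Vst = Vst * Φ := by
  obtain ⟨f, hf⟩ := exists_linear_selection (⊤ : Submodule ℝ (EuclideanSpace ℝ (Fin d)))
    (LinearMap.ker ((matL ((A + B * M) * Vst)).coprod (-(matL Vst)))) fun ξ _ => by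
      have h1 : matL Vst ξ ∈ V ⊓ ctrlSubspace A B := by
        rw [← hVst]
        exact ⟨ξ, rfl⟩
      have h2 : matL (A + B * M) (matL Vst ξ) ∈ LinearMap.range (matL Vst) := by
        rw [hVst]
        exact Submodule.mem_inf.2 ⟨hinv _ (Submodule.mem_inf.1 h1).1,
          ctrl_invariant hn M (Submodule.mem_inf.1 h1).2⟩
      obtain ⟨η, hη⟩ := h2
      exact ⟨η, by simp [matL_mul_apply, hη]⟩
  obtain ⟨Φ, rfl⟩ := exists_matL_eq f
  refine ⟨Φ, sub_eq_zero.1 ((matL_eq_zero_iff _).2 fun ξ => ?_)⟩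
  have := hf ξ trivial
  rw [LinearMap.mem_ker, LinearMap.coprod_apply, LinearMap.neg_apply, ← matL_mul_apply] at this
  rw [sub_eq_add_neg, matL_add_apply, ← this]
  simp [matL]

end Detect

/-- Theorem 1 of the paper: characterization of vulnerability. -/
theorem vulnerability_characterization {n m p r d : ℕ}
    (A : Matrix (Fin n) (Fin n) ℝ) (B : Matrix (Fin n) (Fin m) ℝ)
    (C : Matrix (Fin p) (Fin n) ℝ) (D : Matrix (Fin p) (Fin m) ℝ)
    (E : Matrix (Fin r) (Fin n) ℝ) (F : Matrix (Fin r) (Fin m) ℝ)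
    (V : Submodule ℝ (EuclideanSpace ℝ (Fin n)))
    (hV : IsMaxOutputNulling A B C D V) (hVne : V ≠ ⊥)
    (Vst : Matrix (Fin n) (Fin d) ℝ)
    (hVstSpan : LinearMap.range (matL Vst) = V ⊓ ctrlSubspace A B)
    (hVstInj : LinearMap.ker (matL Vst) = ⊥) :
    ¬ Detectable A B C D E F ↔
      (¬ (LinearMap.ker (matL B) ⊓ LinearMap.ker (matL D) ≤
            LinearMap.ker (matL F))) ∨
      (∃ (s : ℕ) (Mh : Matrix (Fin m) (Fin n) ℝ) (Nh : Matrix (Fin m) (Fin s) ℝ),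
        IsFriend A B C D V Mh Nh ∧
        (F * Nh ≠ 0 ∨
          ∃ j : ℕ, j < n ∧ (E + F * Mh) * (A + B * Mh) ^ j * (B * Nh) ≠ 0)) ∨
      (∃ (s : ℕ) (Mh : Matrix (Fin m) (Fin n) ℝ) (Nh : Matrix (Fin m) (Fin s) ℝ),
        IsFriend A B C D V Mh Nh ∧
        ∃ Φ : Matrix (Fin d) (Fin d) ℝ, (A + B * Mh) * Vst = Vst * Φ ∧
          ∃ lam : ℂ, 1 ≤ ‖lam‖ ∧
            ¬ (Module.End.maxGenEigenspace
                  (Matrix.mulVecLin (Φ.map (algebraMap ℝ ℂ))) lam ≤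
                LinearMap.ker
                  (Matrix.mulVecLin (((E + F * Mh) * Vst).map (algebraMap ℝ ℂ))))) := by
  constructor
  · intro hnd
    by_contra hcon
    push Not at hcon
    obtain ⟨hi, hii, hiii⟩ := hcon
    have hn : 0 < n := by
      rcases Nat.eq_zero_or_pos n with rfl | h
      · exact absurd (Subsingleton.elim V ⊥) hVne
      · exact h
    obtain ⟨M, N, hMN⟩ := exists_friend hV.1
    obtain ⟨hFN, himp⟩ := hii m M N hMN
    obtain ⟨Φ, hΦ⟩ := exists_restriction hn hMN.1 hVstSpan
    exact hnd (detectable_of_no_attack hn hV hVstSpan hMN hi hFN himp hΦ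
      (hiii m M N hMN Φ hΦ))
  · rintro (h | ⟨s, M, N, hMN, h⟩ | ⟨s, M, N, hMN, Φ, hΦ, lam, hlam, h⟩)
    · exact not_detectable_of_kernel h
    · exact not_detectable_of_impulse hMN h
    · exact not_detectable_of_resonance hMN.1 hMN.2.1 hVstSpan hΦ hlam h
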